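/- Let R be an integral domain, X a set with at least two elements, and L the free Lie algebra over R on X. Let φ : L → L be an additive group endomorphism satisfying φ(⁅a, b⁆) = ⁅φ(a), b⁆ = ⁅a, φ(b)⁆ for all a, b ∈ L. Then there exists a unique r ∈ R such that φ(a) = r • a for all a ∈ L. (In particular, the maximal ring of scalars of the multiplication map of L is isomorphic to R.) -/

import Mathlib

namespace FreeLieAlgebra

attribute [local instance] LieRing.ofAssociativeRing

universe u v

variable {R : Type u} [CommRing R] {X : Type v}

/-- The weight filtration of the free Lie algebra: `WeightLE w n a` says that `a` is a linear
combination of iterated brackets of generators of total weight at most `n`, where the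
generator `x` has weight `w x`. -/
inductive WeightLE (w : X → ℕ) : ℕ → FreeLieAlgebra R X → Prop
  | zero (n : ℕ) : WeightLE w n 0
  | add {n : ℕ} {a b : FreeLieAlgebra R X} :
      WeightLE w n a → WeightLE w n b → WeightLE w n (a + b)
  | smul {n : ℕ} (r : R) {a : FreeLieAlgebra R X} : WeightLE w n a → WeightLE w n (r • a)
  | of {n : ℕ} (x : X) : w x ≤ n → WeightLE w n (of R x)
  | lie {m k n : ℕ} {a b : FreeLieAlgebra R X} :
      WeightLE w m a → WeightLE w k b → m + k ≤ n → WeightLE w n ⁅a, b⁆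

theorem WeightLE.mono {w : X → ℕ} {m n : ℕ} {a : FreeLieAlgebra R X} (h : WeightLE w m a)
    (hmn : m ≤ n) : WeightLE w n a := by
  induction h generalizing n with
  | zero => exact .zero n
  | add _ _ iha ihb => exact .add (iha hmn) (ihb hmn)
  | smul r _ ih => exact .smul r (ih hmn)
  | of x hx => exact .of x (hx.trans hmn)
  | lie ha hb hmk => exact .lie ha hb (hmk.trans hmn)

theorem WeightLE.eq_zero {w : X → ℕ} {n : ℕ} {a : FreeLieAlgebra R X} (h : WeightLE w n a)
    (hw : ∀ x, n < w x) : a = 0 := by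
  induction h with
  | zero => rfl
  | add _ _ iha ihb => rw [iha hw, ihb hw, add_zero]
  | smul r _ ih => rw [ih hw, smul_zero]
  | of x hx => exact absurd (hw x) (by lia)
  | lie _ _ hmk iha _ => rw [iha fun x => lt_of_le_of_lt (by lia) (hw x), zero_lie]

/-- Induction principle for the free Lie algebra. -/
theorem induction_of {p : FreeLieAlgebra R X → Prop} (zero : p 0)
    (add : ∀ a b, p a → p b → p (a + b)) (smul : ∀ (r : R) (a), p a → p (r • a))
    (of : ∀ x, p (of R x)) (lie : ∀ a b, p a → p b → p ⁅a, b⁆) (a : FreeLieAlgebra R X) :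
    p a := by
  let S : LieSubalgebra R (FreeLieAlgebra R X) :=
    { carrier := {a | p a}
      zero_mem' := zero
      add_mem' := fun {a b} ha hb => add a b ha hb
      smul_mem' := fun r a ha => smul r a ha
      lie_mem' := fun {a b} ha hb => lie a b ha hb }
  let f : X → S := fun x => ⟨FreeLieAlgebra.of R x, of x⟩
  have h : S.incl.comp (lift R f) = LieHom.id := by
    ext x
    simp [f]
  have ha := LieHom.congr_fun h a
  rw [LieHom.comp_apply, LieHom.id_apply] at ha
  rw [← ha]
  exact (lift R f a).2

/-- Every element is of bounded weight, uniformly in all weight functions that are at most one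
on a suitable finite set of generators. -/
theorem exists_weightLE (a : FreeLieAlgebra R X) :
    ∃ (s : Set X) (n : ℕ), s.Finite ∧ ∀ w : X → ℕ, (∀ x ∈ s, w x ≤ 1) → WeightLE w n a := by
  induction a using induction_of with
  | zero => exact ⟨∅, 0, Set.finite_empty, fun w _ => .zero 0⟩
  | add a b iha ihb =>
    obtain ⟨s, m, hs, ha⟩ := iha
    obtain ⟨t, n, ht, hb⟩ := ihb
    exact ⟨s ∪ t, m + n, hs.union ht, fun w hw =>
      .add ((ha w fun x hx => hw x (.inl hx)).mono (by lia))
        ((hb w fun x hx => hw x (.inr hx)).mono (by lia))⟩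
  | smul r a ih =>
    obtain ⟨s, m, hs, ha⟩ := ih
    exact ⟨s, m, hs, fun w hw => .smul r (ha w hw)⟩
  | of x => exact ⟨{x}, 1, Set.finite_singleton x, fun w hw => .of x (hw x rfl)⟩
  | lie a b iha ihb =>
    obtain ⟨s, m, hs, ha⟩ := iha
    obtain ⟨t, n, ht, hb⟩ := ihb
    exact ⟨s ∪ t, m + n, hs.union ht, fun w hw =>
      .lie (ha w fun x hx => hw x (.inl hx)) (hb w fun x hx => hw x (.inr hx)) le_rfl⟩

/-! ### Elimination of a generator -/

/-- The alphabet of Lazard elimination: `(z, k)` stands for `(ad x)ᵏ z`. -/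
abbrev Elim (x : X) : Type v := {z : X // z ≠ x} × ℕ

/-- The weight of `(ad x)ᵏ z`. -/
def elimWeight (w : X → ℕ) (x : X) (y : Elim x) : ℕ := w y.1 + y.2 * w x

variable (R) in
/-- The map from the free Lie algebra on the symbols `(ad x)ᵏ z` to the one on `X`. -/
noncomputable def elimHom (x : X) : FreeLieAlgebra R (Elim x) →ₗ⁅R⁆ FreeLieAlgebra R X :=
  lift R fun y => (fun a => ⁅of R x, a⁆)^[y.2] (of R y.1.1)

theorem elimHom_of_zero (x : X) (z : {z : X // z ≠ x}) :
    elimHom R x (of R (z, 0)) = of R z.1 := by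
  simp [elimHom]

theorem elimHom_of_succ (x : X) (z : {z : X // z ≠ x}) (k : ℕ) :
    elimHom R x (of R (z, k + 1)) = ⁅of R x, elimHom R x (of R (z, k))⁆ := by
  simp only [elimHom, lift_of_apply, Function.iterate_succ_apply']

theorem WeightLE.exists_lie_elimHom {w : X → ℕ} {x : X} {n : ℕ}
    {b : FreeLieAlgebra R (Elim x)} (h : WeightLE (elimWeight w x) n b) :
    ∃ b', WeightLE (elimWeight w x) (n + w x) b' ∧
      ⁅FreeLieAlgebra.of R x, elimHom R x b⁆ = elimHom R x b' := by
  induction h with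
  | zero n => exact ⟨0, .zero _, by simp⟩
  | add _ _ iha ihb =>
    obtain ⟨a', ha, ha'⟩ := iha
    obtain ⟨b', hb, hb'⟩ := ihb
    exact ⟨a' + b', .add ha hb, by simp [ha', hb']⟩
  | smul r _ ih =>
    obtain ⟨a', ha, ha'⟩ := ih
    exact ⟨r • a', .smul r ha, by simp [ha']⟩
  | of y hy =>
    obtain ⟨z, k⟩ := y
    refine ⟨FreeLieAlgebra.of R (z, k + 1), .of _ ?_, (elimHom_of_succ x z k).symm⟩
    simp only [elimWeight, add_mul, one_mul] at hy ⊢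
    lia
  | @lie m k n a b ha hb hmk iha ihb =>
    obtain ⟨a', ha₁, ha'⟩ := iha
    obtain ⟨b', hb₁, hb'⟩ := ihb
    refine ⟨⁅a', b⁆ + ⁅a, b'⁆, .add (.lie ha₁ hb (by lia)) (.lie ha hb₁ (by lia)), ?_⟩
    rw [LieHom.map_lie, leibniz_lie, ha', hb', map_add, LieHom.map_lie, LieHom.map_lie]

/-- Lazard elimination: the generator `x` and the elements `(ad x)ᵏ z` generate, compatibly with
weights. -/
theorem WeightLE.exists_eq_smul_add_elimHom {w : X → ℕ} (x : X) {n : ℕ}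
    {a : FreeLieAlgebra R X} (h : WeightLE w n a) :
    ∃ (c : R) (b : FreeLieAlgebra R (Elim x)), (c = 0 ∨ w x ≤ n) ∧
      WeightLE (elimWeight w x) n b ∧ a = c • FreeLieAlgebra.of R x + elimHom R x b := by
  induction h with
  | zero n => exact ⟨0, 0, .inl rfl, .zero _, by simp⟩
  | add _ _ iha ihb =>
    obtain ⟨c, a', hc, ha, rfl⟩ := iha
    obtain ⟨d, b', hd, hb, rfl⟩ := ihb
    refine ⟨c + d, a' + b', ?_, .add ha hb, by rw [map_add, add_smul]; abel⟩
    rcases hc with rfl | hc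
    · rcases hd with rfl | hd
      · simp
      · exact .inr hd
    · exact .inr hc
  | smul r _ ih =>
    obtain ⟨c, a', hc, ha, rfl⟩ := ih
    refine ⟨r * c, r • a', ?_, .smul r ha, by simp [mul_smul]⟩
    rcases hc with rfl | hc
    · simp
    · exact .inr hc
  | of z hz =>
    by_cases hzx : z = x
    · subst hzx
      exact ⟨1, 0, .inr hz, .zero _, by simp⟩
    · refine ⟨0, FreeLieAlgebra.of R (⟨z, hzx⟩, 0), .inl rfl, .of _ ?_, ?_⟩
      · simpa [elimWeight] using hz
      · rw [elimHom_of_zero, zero_smul, zero_add]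
  | @lie m k n a b _ _ hmk iha ihb =>
    obtain ⟨c, a', hc, ha, rfl⟩ := iha
    obtain ⟨d, b', hd, hb, rfl⟩ := ihb
    obtain ⟨a₂, ha₂, hxa⟩ := ha.exists_lie_elimHom
    obtain ⟨b₂, hb₂, hxb⟩ := hb.exists_lie_elimHom
    have hcb : WeightLE (elimWeight w x) n (c • b₂) := by
      rcases hc with rfl | hc
      · rw [zero_smul]; exact .zero _
      · exact .smul c (hb₂.mono (by lia))
    have hda : WeightLE (elimWeight w x) n ((-d) • a₂) := by
      rcases hd with rfl | hd
      · rw [neg_zero, zero_smul]; exact .zero _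
      · exact .smul (-d) (ha₂.mono (by lia))
    refine ⟨0, c • b₂ + (-d) • a₂ + ⁅a', b'⁆, .inl rfl,
      .add (.add hcb hda) (.lie ha hb hmk), ?_⟩
    have hax : ⁅elimHom R x a', FreeLieAlgebra.of R x⁆ = -elimHom R x a₂ := by rw [← hxa, lie_skew]
    simp only [lie_add, add_lie, smul_lie, lie_smul, lie_self, smul_zero, hax, hxb, map_add,
      map_smul, LieHom.map_lie, zero_smul, zero_add, map_neg, neg_smul, smul_neg]
    abel

/-! ### The embedding into the free associative algebra -/

variable (R X) in
/-- The canonical map from the free Lie algebra to the algebra of noncommutative polynomials. -/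
noncomputable def toMonoidAlgebra :
    FreeLieAlgebra R X →ₗ⁅R⁆ MonoidAlgebra R (FreeMonoid X) :=
  lift R fun x => MonoidAlgebra.of R _ (FreeMonoid.of x)

@[simp]
theorem toMonoidAlgebra_of (x : X) :
    toMonoidAlgebra R X (of R x) = MonoidAlgebra.of R _ (FreeMonoid.of x) := by
  simp [toMonoidAlgebra]

/-- The Lie homomorphism to an associative algebra given by `f` factors through
`toMonoidAlgebra`. -/
theorem lift_apply_eq {A : Type*} [Ring A] [Algebra R A] (f : X → A) (a : FreeLieAlgebra R X) :
    lift R f a =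
      MonoidAlgebra.lift R A (FreeMonoid X) (FreeMonoid.lift f) (toMonoidAlgebra R X a) := by
  have h : lift R f =
      (MonoidAlgebra.lift R A (FreeMonoid X) (FreeMonoid.lift f)).toLieHom.comp
        (toMonoidAlgebra R X) := by
    ext x
    simp
  exact LieHom.congr_fun h a

variable (R) in
/-- The shift derivation on words: it sends `y₁ ⋯ yₙ` to the sum of the words obtained by
increasing the second component of one letter. -/
noncomputable def shiftWord {Z : Type v} :
    List (Z × ℕ) → MonoidAlgebra R (FreeMonoid (Z × ℕ))
  | [] => 0
  | y :: l =>
    MonoidAlgebra.of R _ (FreeMonoid.of (y.1, y.2 + 1)) *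
        MonoidAlgebra.of R _ (FreeMonoid.ofList l) +
      MonoidAlgebra.of R _ (FreeMonoid.of y) * shiftWord l

variable (R) in
/-- The derivation of the free associative algebra on `Z × ℕ` sending `(z, k)` to
`(z, k + 1)`, as a linear map. -/
noncomputable def shift (Z : Type v) :
    Module.End R (MonoidAlgebra R (FreeMonoid (Z × ℕ))) :=
  (Finsupp.linearCombination R fun w => shiftWord R (FreeMonoid.toList w)) ∘ₗ
    (MonoidAlgebra.coeffLinearEquiv R).toLinearMap

theorem shift_of {Z : Type v} (w : FreeMonoid (Z × ℕ)) :
    shift R Z (MonoidAlgebra.of R _ w) = shiftWord R (FreeMonoid.toList w) := by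
  simp [shift]

theorem lie_shift_lmul {Z : Type v} (z : Z) (k : ℕ) :
    ⁅shift R Z, Algebra.lmul R _ (MonoidAlgebra.of R _ (FreeMonoid.of (z, k)))⁆ =
      Algebra.lmul R _ (MonoidAlgebra.of R _ (FreeMonoid.of (z, k + 1))) := by
  refine MonoidAlgebra.lhom_ext' fun w => LinearMap.ext_ring ?_
  have h (v : FreeMonoid (Z × ℕ)) : (MonoidAlgebra.lsingle v : R →ₗ[R] _) 1 =
    MonoidAlgebra.of R _ v := rfl
  rw [LinearMap.comp_apply, LinearMap.comp_apply, h, Ring.lie_def, LinearMap.sub_apply,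
    Module.End.mul_apply, Module.End.mul_apply, Algebra.coe_lmul_eq_mul, LinearMap.mul_apply',
    LinearMap.mul_apply', ← map_mul, shift_of, shift_of, FreeMonoid.toList_of_mul, shiftWord,
    FreeMonoid.ofList_toList, LinearMap.mul_apply', add_sub_cancel_right]

theorem shift_one (Z : Type v) : shift R Z 1 = 0 := by
  rw [← map_one (MonoidAlgebra.of R (FreeMonoid (Z × ℕ))), shift_of, FreeMonoid.toList_one,
    shiftWord]

open Classical in
variable (R) in
/-- The free Lie algebra on `X` acts on the free associative algebra on `Elim x`: the generator `x`
acts by the shift derivation, any other generator `z` by left multiplication by `(z, 0)`. -/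
noncomputable def elimRep (x : X) :
    FreeLieAlgebra R X →ₗ⁅R⁆ Module.End R (MonoidAlgebra R (FreeMonoid (Elim x))) :=
  lift R fun z => if hz : z = x then shift R _ else
    Algebra.lmul R _ (MonoidAlgebra.of R _ (FreeMonoid.of (⟨z, hz⟩, 0)))

theorem elimRep_of_self (x : X) : elimRep R x (of R x) = shift R _ := by
  simp [elimRep]

theorem elimRep_elimHom (x : X) (b : FreeLieAlgebra R (Elim x)) :
    elimRep R x (elimHom R x b) = Algebra.lmul R _ (toMonoidAlgebra R _ b) := by
  have h : (elimRep R x).comp (elimHom R x) =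
      (Algebra.lmul R (MonoidAlgebra R (FreeMonoid (Elim x)))).toLieHom.comp
        (toMonoidAlgebra R _) := by
    ext1 y
    obtain ⟨z, k⟩ := y
    rw [LieHom.comp_apply, LieHom.comp_apply, toMonoidAlgebra_of, AlgHom.toLieHom_apply]
    induction k with
    | zero => simp [elimHom_of_zero, elimRep, z.2]
    | succ k ih => rw [elimHom_of_succ, LieHom.map_lie, ih, elimRep_of_self, lie_shift_lmul]
  exact LieHom.congr_fun h b

theorem elimRep_eq_zero {x : X} {a : FreeLieAlgebra R X} (h : toMonoidAlgebra R X a = 0) :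
    elimRep R x a = 0 := by
  rw [elimRep, lift_apply_eq, h, map_zero]

/-- Both components of the elimination decomposition can be read off in the free associative
algebra. -/
theorem eq_zero_of_smul_of_add_elimHom {x : X} {c : R} {b : FreeLieAlgebra R (Elim x)}
    (h : toMonoidAlgebra R X (c • of R x + elimHom R x b) = 0) :
    c = 0 ∧ toMonoidAlgebra R _ b = 0 := by
  classical
  constructor
  · let f : X → R := fun z => if z = x then 1 else 0
    have hf : (lift R f).comp (elimHom R x) = 0 := by
      ext1 y
      obtain ⟨z, k⟩ := y
      cases k with
      | zero => simp [elimHom_of_zero, f, z.2]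
      | succ k => simp [elimHom_of_succ, Ring.lie_def, mul_comm]
    have hb : lift R f (elimHom R x b) = 0 := LieHom.congr_fun hf b
    have hc := lift_apply_eq f (c • of R x + elimHom R x b)
    rw [h, map_zero, map_add, hb, add_zero, map_smul, lift_of_apply] at hc
    simpa [f] using hc
  · have h₁ := LinearMap.congr_fun (elimRep_eq_zero (x := x) h) 1
    simpa [elimRep_of_self, elimRep_elimHom, shift_one] using h₁

theorem finite_elimWeight_le {w : X → ℕ} {x : X} {n : ℕ} (hx : 0 < w x)
    (hfin : {z | w z ≤ n}.Finite) : {y : Elim x | elimWeight w x y ≤ n}.Finite := by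
  refine ((hfin.preimage Subtype.val_injective.injOn).prod (Set.finite_Iic n)).subset ?_
  rintro ⟨z, k⟩ h
  simp only [elimWeight, Set.mem_ofPred_eq] at h
  have : k ≤ k * w x := Nat.le_mul_of_pos_right k hx
  exact ⟨by simp; lia, by simp; lia⟩

theorem ncard_elimWeight_eq_lt {w : X → ℕ} {x : X} (hx : 0 < w x)
    (hfin : {z | w z = w x}.Finite) (hw : ∀ z, w x ≤ w z) :
    {y : Elim x | elimWeight w x y = w x}.ncard < {z | w z = w x}.ncard := by
  have h : (fun y : Elim x => y.1.1) '' {y : Elim x | elimWeight w x y = w x} ⊆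
      {z | w z = w x} \ {x} := by
    rintro _ ⟨⟨z, k⟩, h, rfl⟩
    simp only [elimWeight, Set.mem_ofPred_eq] at h
    have := hw z
    exact ⟨by simp; lia, z.2⟩
  have hinj : Set.InjOn (fun y : Elim x => y.1.1) {y : Elim x | elimWeight w x y = w x} := by
    have hk (y : Elim x) (h : elimWeight w x y = w x) : y.2 = 0 := by
      simp only [elimWeight] at h
      have := hw y.1
      by_contra h0
      have := Nat.le_mul_of_pos_left (w x) (Nat.pos_of_ne_zero h0)
      lia
    intro y hy y' hy' hyy
    exact Prod.ext (Subtype.ext hyy) ((hk y hy).trans (hk y' hy').symm)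
  rw [← hinj.ncard_image]
  refine (Set.ncard_le_ncard h (hfin.subset Set.sdiff_subset)).trans_lt ?_
  exact Set.ncard_sdiff_singleton_lt_of_mem rfl hfin

/-- Elements of weight at most `n` are determined by their image in the free associative algebra,
if only finitely many generators have weight at most `n`. -/
theorem WeightLE.eq_zero_of_toMonoidAlgebra_eq_zero (n d : ℕ) :
    ∀ (X : Type v) (w : X → ℕ) (m : ℕ), n < m + d → 0 < m → (∀ x, m ≤ w x) →
      {x | w x ≤ n}.Finite → ∀ a : FreeLieAlgebra R X, WeightLE w n a →
        toMonoidAlgebra R X a = 0 → a = 0 := by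
  induction d with
  | zero => exact fun X w m hn _ hw _ a ha _ => ha.eq_zero fun x => hn.trans_le (hw x)
  | succ d ihd =>
    intro X w m hn hm hw hfin a ha h0
    induction hN : {x | w x = m}.ncard using Nat.strong_induction_on generalizing X with
    | _ N ih =>
      by_cases hnm : n < m
      · exact ha.eq_zero fun x => hnm.trans_le (hw x)
      by_cases hx : ∃ x, w x = m
      · obtain ⟨x, rfl⟩ := hx
        obtain ⟨c, b, -, hb, rfl⟩ := ha.exists_eq_smul_add_elimHom x
        obtain ⟨rfl, hb0⟩ := eq_zero_of_smul_of_add_elimHom h0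
        have hlt := ncard_elimWeight_eq_lt hm
          (hfin.subset fun z (hz : w z = w x) => by simp; lia) hw
        rw [ih _ (hN ▸ hlt) (Elim x) (elimWeight w x)
          (fun y => (hw y.1).trans (Nat.le_add_right _ _)) (finite_elimWeight_le hm hfin)
          b hb hb0 rfl]
        simp
      · push Not at hx
        exact ihd X w (m + 1) (by lia) (by lia)
          (fun x => lt_of_le_of_ne (hw x) (hx x).symm) hfin a ha h0

variable (R X) in
/-- The free Lie algebra embeds into the free associative algebra. -/
theorem toMonoidAlgebra_injective : Function.Injective (toMonoidAlgebra R X) := by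
  classical
  refine (injective_iff_map_eq_zero _).2 fun a ha => ?_
  obtain ⟨s, n, hs, hw⟩ := exists_weightLE a
  let w : X → ℕ := fun x => if x ∈ s then 1 else n + 1
  refine (hw w fun x hx => by simp [w, hx]).eq_zero_of_toMonoidAlgebra_eq_zero n n X w 1
    (by lia) one_pos (fun x => ?_) (hs.subset fun x hx => ?_) a ha
  · by_cases hx : x ∈ s <;> simp [w, hx]
  · by_contra h
    simp [w, h] at hx

/-! ### Centralizers of generators -/

theorem coeff_eq_zero_of_commute {x : X} {p : MonoidAlgebra R (FreeMonoid X)}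
    (hp : Commute (MonoidAlgebra.of R _ (FreeMonoid.of x)) p) (l s : List X)
    (hl : ∃ z ∈ l, z ≠ x) : p.coeff (FreeMonoid.ofList (l ++ s)) = 0 := by
  have key (v : FreeMonoid X) : p.coeff v =
      (MonoidAlgebra.single (FreeMonoid.of x) 1 * p).coeff (v * FreeMonoid.of x) := by
    have hp' : MonoidAlgebra.single (FreeMonoid.of x) 1 * p =
      p * MonoidAlgebra.single (FreeMonoid.of x) 1 := hp
    rw [hp', MonoidAlgebra.coeff_mul_single_mul, mul_one]
  induction l generalizing s with
  | nil => simp at hl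
  | cons z l ih =>
    by_cases hz : z = x
    · subst hz
      have hl' : ∃ y ∈ l, y ≠ z := by simpa using hl
      rw [key, List.cons_append, FreeMonoid.ofList_cons, mul_assoc,
        MonoidAlgebra.coeff_single_mul_mul, one_mul, ← ih (s ++ [z]) hl', ← List.append_assoc,
        FreeMonoid.ofList_append _ [z], FreeMonoid.ofList_singleton]
    · rw [key, MonoidAlgebra.coeff_single_mul_of_forall_mul_ne]
      intro d hd
      have := congrArg FreeMonoid.toList hd
      simp at this
      exact hz this.1.symm

theorem exists_eq_smul_of_lie_eq_zero {x : X} {a : FreeLieAlgebra R X} (h : ⁅of R x, a⁆ = 0) :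
    ∃ c : R, a = c • of R x := by
  classical
  obtain ⟨s, n, -, hw⟩ := exists_weightLE a
  obtain ⟨c, b, -, -, rfl⟩ :=
    (hw (fun _ => 1) fun _ _ => le_rfl).exists_eq_smul_add_elimHom x
  refine ⟨c, ?_⟩
  suffices toMonoidAlgebra R X (elimHom R x b) = 0 by
    rw [toMonoidAlgebra_injective R X (this.trans (map_zero _).symm), add_zero]
  rw [lie_add, lie_smul, lie_self, smul_zero, zero_add] at h
  have hcomm : Commute (MonoidAlgebra.of R _ (FreeMonoid.of x))
      (toMonoidAlgebra R X (elimHom R x b)) := by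
    have := congrArg (toMonoidAlgebra R X) h
    rwa [LieHom.map_lie, map_zero, toMonoidAlgebra_of, Ring.lie_def, sub_eq_zero] at this
  let f : X → MonoidAlgebra R (FreeMonoid X) :=
    fun z => if z = x then MonoidAlgebra.of R _ (FreeMonoid.of z) else 0
  have hf : (lift R f).comp (elimHom R x) = 0 := by
    ext1 y
    obtain ⟨z, k⟩ := y
    induction k with
    | zero => simp [elimHom_of_zero, f, z.2]
    | succ k ih =>
      rw [LieHom.comp_apply, LieHom.zero_apply] at ih ⊢
      rw [elimHom_of_succ, LieHom.map_lie, ih, lie_zero]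
  have hb : lift R f (elimHom R x b) = 0 := LieHom.congr_fun hf b
  rw [lift_apply_eq, MonoidAlgebra.lift_apply] at hb
  rw [← hb]
  conv_lhs => rw [← MonoidAlgebra.sum_coeff_single (toMonoidAlgebra R X (elimHom R x b))]
  refine Finsupp.sum_congr fun v hv => ?_
  have hvx : ∀ z ∈ FreeMonoid.toList v, z = x := by
    by_contra! hz
    have := coeff_eq_zero_of_commute hcomm (FreeMonoid.toList v) [] hz
    rw [List.append_nil, FreeMonoid.ofList_toList] at this
    exact Finsupp.mem_support_iff.1 hv this
  have hfv : FreeMonoid.lift f v = MonoidAlgebra.of R _ v := by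
    clear hv
    induction v using FreeMonoid.inductionOn' with
    | one => rw [map_one, map_one]
    | of_mul z v ih =>
      rw [FreeMonoid.toList_of_mul, List.forall_mem_cons] at hvx
      rw [map_mul, map_mul, ih hvx.2, FreeMonoid.lift_eval_of]
      simp [f, hvx.1]
  rw [hfv]
  simp

theorem eq_zero_of_smul_lie_of_eq_zero {x y : X} (hxy : x ≠ y) {c : R}
    (h : c • ⁅of R x, of R y⁆ = 0) : c = 0 := by
  have h₁ := congrArg (fun a => (toMonoidAlgebra R X a).coeff
    (FreeMonoid.of x * FreeMonoid.of y)) h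
  have hne : FreeMonoid.of y * FreeMonoid.of x ≠ FreeMonoid.of x * FreeMonoid.of y := by
    intro h
    have := congrArg FreeMonoid.toList h
    simp at this
    exact hxy this.2
  simpa [Ring.lie_def, MonoidAlgebra.single_mul_single, hne, Finsupp.single_apply] using h₁

end FreeLieAlgebra

/-- The maximal ring of scalars of a non-commutative free Lie algebra `L` over an
integral domain `R` is `R` itself: every additive endomorphism `φ` of `L` with
`φ⁅a,b⁆ = ⁅φ a, b⁆ = ⁅a, φ b⁆` is multiplication by a unique scalar `r ∈ R`. -/
theorem freeLie_maximal_ring_of_scalars {R : Type*} [CommRing R] [IsDomain R]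
    {X : Type*} (hX : ∃ x y : X, x ≠ y)
    (φ : FreeLieAlgebra R X →+ FreeLieAlgebra R X)
    (hφ₁ : ∀ a b : FreeLieAlgebra R X, φ ⁅a, b⁆ = ⁅φ a, b⁆)
    (hφ₂ : ∀ a b : FreeLieAlgebra R X, φ ⁅a, b⁆ = ⁅a, φ b⁆) :
    ∃! r : R, ∀ a : FreeLieAlgebra R X, φ a = r • a := by
  open FreeLieAlgebra in
  obtain ⟨x, y, hxy⟩ := hX
  have hself (z : X) : ∃ r : R, φ (of R z) = r • of R z :=
    exists_eq_smul_of_lie_eq_zero (by rw [← hφ₂, lie_self, map_zero])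
  obtain ⟨r, hr⟩ := hself x
  obtain ⟨s, hs⟩ := hself y
  have hrs : r = s := by
    refine sub_eq_zero.1 (eq_zero_of_smul_lie_of_eq_zero hxy ?_)
    rw [sub_smul, ← smul_lie, ← lie_smul, ← hr, ← hs, ← hφ₁, ← hφ₂, sub_self]
  subst hrs
  have hcomm {z : X} (hz : φ (of R z) = r • of R z) (a : FreeLieAlgebra R X) :
      ⁅of R z, φ a - r • a⁆ = 0 := by
    rw [lie_sub, lie_smul, ← hφ₂, hφ₁, hz, smul_lie, sub_self]
  refine ⟨r, fun a => ?_, fun t ht => ?_⟩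
  · obtain ⟨c, hc⟩ := exists_eq_smul_of_lie_eq_zero (hcomm hr a)
    have h := hcomm hs a
    rw [hc, lie_smul] at h
    rw [eq_zero_of_smul_lie_of_eq_zero hxy.symm h, zero_smul] at hc
    exact sub_eq_zero.1 hc
  · refine sub_eq_zero.1 (eq_zero_of_smul_lie_of_eq_zero hxy ?_)
    rw [sub_smul, ← smul_lie, ← smul_lie, ← ht, ← hr, sub_self]
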